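/- arXiv:1301.6419 — 2 statements merged into one kernel-verified Lean document; each statement's English description precedes it below -/
import Mathlib

section
/- Let G be a branch group acting on a rooted tree T, let H be a subgroup of finite index in G and let K be a normal subgroup of H. If K ∩ rist_G(v) is non-trivial for every vertex v of T, then rist_G(n)' ≤ K for some n. -/
/-!  Common definitions: rooted trees of type `(m n)`, tree automorphisms,
rigid stabilizers, branch groups, and auxiliary notions. -/

universe u

/-- Vertices of the rooted tree of type `m`: finite sequences `(x_0, …, x_{n-1})`
with `x_i ∈ {1, …, m i}` (encoded as `Fin (m i)`). -/
def Vertex (m : ℕ → ℕ) : Type := Σ n : ℕ, ∀ i : Fin n, Fin (m i)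

namespace Vertex

variable {m : ℕ → ℕ}

/-- The level of a vertex: its length. -/
def level (v : Vertex m) : ℕ := v.1

/-- `v` is a (weak) prefix of `w`; i.e. `w` lies in the subtree `T_v`
(`w = v` or `w` is a descendant of `v`). -/
def IsPrefix (v w : Vertex m) : Prop :=
  ∃ h : v.1 ≤ w.1, ∀ i : Fin v.1, w.2 (Fin.castLE h i) = v.2 i

/-- `w` is a child (one-step extension) of `v`. -/
def IsChild (v w : Vertex m) : Prop := w.1 = v.1 + 1 ∧ IsPrefix v w

end Vertex

/-- The `n`-th layer `L_n` of the tree: all vertices of level `n`. -/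
def layer (m : ℕ → ℕ) (n : ℕ) : Set (Vertex m) := {v | v.1 = n}

section Rist

variable {m : ℕ → ℕ} (G : Type*) [Group G] [MulAction G (Vertex m)]

/-- The rigid stabilizer of a vertex `v`: all elements fixing every vertex
outside the subtree `T_v`. -/
def rist (v : Vertex m) : Subgroup G :=
  ⨅ w ∈ {w : Vertex m | ¬ Vertex.IsPrefix v w}, MulAction.stabilizer G w

/-- The subgroup generated by the rigid stabilizers of the vertices in `X`. -/
def ristSet (X : Set (Vertex m)) : Subgroup G := ⨆ v ∈ X, rist G v

/-- `rist_G(n)`, the rigid stabilizer of the `n`-th layer. -/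
def ristLayer (m : ℕ → ℕ) (G : Type*) [Group G] [MulAction G (Vertex m)] (n : ℕ) :
    Subgroup G :=
  ristSet G (layer m n)

/-- The orbit of the vertex `v` under a subgroup `H ≤ G`. -/
def subOrbit (H : Subgroup G) (v : Vertex m) : Set (Vertex m) :=
  {w | ∃ h ∈ H, h • v = w}

/-- The set of orbits of a subgroup `H ≤ G` on a set `X` of vertices. -/
def orbitsOn (H : Subgroup G) (X : Set (Vertex m)) : Set (Set (Vertex m)) :=
  (fun v => subOrbit G H v) '' X

end Rist

/-- `G` is a branch group on the rooted tree of type `m` (with respect to the given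
action): the action is faithful and by tree automorphisms, `G` acts transitively on
each layer, and each `rist_G(n)` has finite index in `G`. -/
structure IsBranchGroup (m : ℕ → ℕ) (G : Type*) [Group G] [MulAction G (Vertex m)] :
    Prop where
  faithful : ∀ g : G, (∀ v : Vertex m, g • v = v) → g = 1
  aut : ∀ (g : G) (v w : Vertex m), Vertex.IsChild v w ↔ Vertex.IsChild (g • v) (g • w)
  trans : ∀ v w : Vertex m, v.1 = w.1 → ∃ g : G, g • v = w
  ristFiniteIndex : ∀ n : ℕ, (ristLayer m G n).FiniteIndex

/-- A group is virtually soluble if it has a soluble subgroup of finite index. -/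
def VirtuallySolvable (Γ : Type*) [Group Γ] : Prop :=
  ∃ S : Subgroup Γ, S.FiniteIndex ∧ IsSolvable ↥S

/-- A group is virtually abelian if it has an abelian subgroup of finite index. -/
def VirtuallyAbelian (Γ : Type*) [Group Γ] : Prop :=
  ∃ S : Subgroup Γ, S.FiniteIndex ∧ ∀ a ∈ S, ∀ b ∈ S, a * b = b * a

/-- For subgroups `A ≤ B` of a group with `A` normalised by `B`, this says that the
factor `B/A` belongs to the class `𝔛`. -/
def FactorIn (𝔛 : (Γ : Type u) → [inst : Group Γ] → Prop) {G : Type u} [Group G]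
    (A B : Subgroup G) : Prop :=
  ∃ hn : (A.subgroupOf B).Normal, letI := hn; 𝔛 (↥B ⧸ A.subgroupOf B)

/-- The factor `B/A` is virtually soluble. -/
def FactorVirtuallySolvable {G : Type*} [Group G] (A B : Subgroup G) : Prop :=
  ∃ hn : (A.subgroupOf B).Normal,
    letI := hn; VirtuallySolvable (↥B ⧸ A.subgroupOf B)

/-- The factor `B/A` is virtually abelian. -/
def FactorVirtuallyAbelian {G : Type*} [Group G] (A B : Subgroup G) : Prop :=
  ∃ hn : (A.subgroupOf B).Normal,
    letI := hn; VirtuallyAbelian (↥B ⧸ A.subgroupOf B)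

/-- `Γ` has `r` infinite normal subgroups that generate their direct product in `Γ`:
each of them intersects trivially the subgroup generated by the others. -/
def HasIndepFamily (Γ : Type*) [Group Γ] (r : ℕ) : Prop :=
  ∃ N : Fin r → Subgroup Γ, (∀ i, (N i).Normal) ∧ (∀ i, Infinite ↥(N i)) ∧
    ∀ i, N i ⊓ (⨆ j ∈ ({i}ᶜ : Set (Fin r)), N j) = ⊥
/-!
Put `C` for the normal core of the normalizer of `K`; it has finite index in `G`.

If `a, b` lie in the normalizer of `K` and some `k ∈ K` is such that `k * a * k⁻¹` commutes with
`b`, then `⁅a, b⁆ = ⁅⁅a, k⁆, b⁆ ∈ K`. Elements `a, b` of `rist_G(w)` need not normalize `K`, but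
`⁅a, g⁆` and `⁅b, h⁆` do for `g, h ∈ C`. Moreover `⁅⁅a, g⁆, ⁅b, h⁆⁆ = ⁅a, b⁆` when `w`, `g • w` and
`h • w` are distinct, because rigid stabilizers of distinct vertices of a layer commute. So
`rist_G(w)' ≤ K` as soon as `K` moves `w` and the `C`-orbit of `w` has room enough to choose `g` and
`h` in general position with respect to `k`.

Both conditions hold on every deep enough layer. The `C`-orbits on a layer contain at least a
fraction `1 / [G : C]` of its vertices. The vertices moved by a conjugate of `K` form an upper set
for the prefix order, which is cofinal by the assumption on `K`. As `K` has finitely many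
conjugates, some vertex `u` is moved by all of them, so `K` moves the whole orbit of `u`, which is
a layer, and all vertices below it.
-/

open MulAction Subgroup
open scoped commutatorElement

section Commutators

variable {G : Type*} [Group G]

theorem commutatorElement_mul_left_of_commute {a b z : G} (h : Commute z b) :
    ⁅a * z, b⁆ = ⁅a, b⁆ := by
  simp [commutatorElement_mul_left_eq_conj_mul, h.commutator_eq]

theorem commutatorElement_mul_right_of_commute {a b z : G} (h : Commute a z) :
    ⁅a, b * z⁆ = ⁅a, b⁆ := by
  simp [commutatorElement_mul_right_eq_mul_conj, h.commutator_eq]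

theorem commutatorElement_eq_mul_conj_inv (a g : G) : ⁅a, g⁆ = a * (g * a * g⁻¹)⁻¹ := by
  simp [commutatorElement_def, mul_assoc]

theorem commutatorElement_mem_of_commute_conj {K : Subgroup G} {k a b : G} (hk : k ∈ K)
    (ha : a ∈ normalizer (K : Set G)) (hb : b ∈ normalizer (K : Set G))
    (hcomm : Commute (k * a * k⁻¹) b) : ⁅a, b⁆ ∈ K := by
  have hak : ⁅a, k⁆ ∈ K :=
    commutator_le.1 (le_normalizer_iff_commutator_le_right.1 le_rfl) a ha k hk
  have hakb : ⁅⁅a, k⁆, b⁆ ∈ K :=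
    commutator_le.1 (le_normalizer_iff_commutator_le_left.1 le_rfl) _ hak b hb
  rwa [commutatorElement_eq_mul_conj_inv a k,
    commutatorElement_mul_left_of_commute hcomm.inv_left] at hakb

theorem commutator_iSup_left_le {ι : Sort*} {A : ι → Subgroup G} {B M : Subgroup G}
    (hA : ∀ i, A i ≤ normalizer (M : Set G)) (hAB : ∀ i, ⁅A i, B⁆ ≤ M) : ⁅⨆ i, A i, B⁆ ≤ M := by
  rw [commutator_le]
  intro x hx b hb
  suffices x ∈ normalizer (M : Set G) ∧ ⁅x, b⁆ ∈ M from this.2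
  refine iSup_induction A (C := fun x ↦ x ∈ normalizer (M : Set G) ∧ ⁅x, b⁆ ∈ M) hx ?_ ?_ ?_
  · exact fun i x hx ↦ ⟨hA i hx, commutator_le.1 (hAB i) x hx b hb⟩
  · simp
  · refine fun x y ihx ihy ↦ ⟨mul_mem ihx.1 ihy.1, ?_⟩
    rw [commutatorElement_mul_left_eq_conj_mul]
    exact mul_mem ((mem_normalizer_iff.1 ihx.1 _).1 ihy.2) ihx.2

theorem commutator_iSup_self_le {ι : Sort*} {A : ι → Subgroup G}
    (hA : ∀ i j, i ≠ j → ⁅A i, A j⁆ = ⊥) : ⁅⨆ i, A i, ⨆ i, A i⁆ ≤ ⨆ i, ⁅A i, A i⁆ := by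
  set M := ⨆ i, ⁅A i, A i⁆
  have hcomm : ∀ i j, ⁅A i, A j⁆ ≤ M := fun i j ↦ by
    obtain rfl | hij := eq_or_ne i j
    · exact le_iSup (fun i ↦ ⁅A i, A i⁆) i
    · exact (hA i j hij).trans_le bot_le
  have hnorm : ∀ i, A i ≤ normalizer (M : Set G) := fun i ↦ by
    refine le_trans (le_iInf fun j ↦ ?_) (iInf_normalizer_le_normalizer_iSup fun j ↦ ⁅A j, A j⁆)
    obtain rfl | hij := eq_or_ne i j
    · exact normalizer_commutator_ge_left _ _
    · rw [le_normalizer_iff_commutator_le_right]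
      exact (commutator_mono le_rfl (commutator_le_self _)).trans ((hA i j hij).trans_le bot_le)
  refine commutator_iSup_left_le hnorm fun i ↦ ?_
  rw [commutator_comm]
  exact commutator_iSup_left_le hnorm fun j ↦ hcomm j i

end Commutators

section Actions

variable {G α : Type*} [Group G] [MulAction G α]

theorem commute_of_forall_smul_eq_or_smul_eq [FaithfulSMul G α] {a b : G}
    (h : ∀ x : α, a • x = x ∨ b • x = x) : Commute a b := by
  have hperm : (toPerm a : Equiv.Perm α).Disjoint (toPerm b) := h
  apply toPerm_injective (α := G) (β := α)
  simpa only [← toPermHom_apply, map_mul] using hperm.commute.eq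

theorem smul_mem_fixedPoints_of_mem_normalizer {K : Subgroup G} {g : G}
    (hg : g ∈ normalizer (K : Set G)) {x : α} (hx : x ∈ fixedPoints K α) :
    g • x ∈ fixedPoints K α := by
  rintro ⟨k, hk⟩
  have hfix : (g⁻¹ * k * g) • x = x := hx ⟨_, (mem_normalizer_iff''.1 hg k).1 hk⟩
  rwa [mul_smul, mul_smul, inv_smul_eq_iff] at hfix

theorem exists_mem_smul_notMem_of_card_lt_ncard_orbit {H : Subgroup G} {x : α} {s : Finset α}
    (hs : s.card < (orbit H x).ncard) : ∃ g ∈ H, g • x ∉ s := by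
  rw [← Set.ncard_coe_finset] at hs
  obtain ⟨_, ⟨g, rfl⟩, hg⟩ := Set.exists_mem_notMem_of_ncard_lt_ncard hs
  exact ⟨g, g.2, hg⟩

theorem ncard_orbit_le_ncard_orbit_mul_index (H : Subgroup G) [H.FiniteIndex] (x : α) :
    (orbit G x).ncard ≤ (orbit H x).ncard * H.index := by
  have hstab : (stabilizer G x).relIndex H = (orbit H x).ncard := index_stabilizer H x
  rw [← index_stabilizer, ← hstab, ← inf_relIndex_right, relIndex_mul_index inf_le_right]
  by_cases hx : (stabilizer G x).index = 0
  · simp [hx]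
  · have : (stabilizer G x ⊓ H).FiniteIndex := ⟨index_inf_ne_zero hx FiniteIndex.index_ne_zero⟩
    exact index_antitone inf_le_left

end Actions

theorem isCofinal_iInter_of_isUpperSet {α ι : Type*} [Preorder α] [Finite ι] {s : ι → Set α}
    (hupper : ∀ i, IsUpperSet (s i)) (hcof : ∀ i, IsCofinal (s i)) : IsCofinal (⋂ i, s i) := by
  suffices h : ∀ t : Set ι, t.Finite → IsCofinal (⋂ i ∈ t, s i) by
    simpa using h Set.univ Set.finite_univ
  intro t ht
  induction t, ht using Set.Finite.induction_on with
  | empty => simp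
  | @insert i t _ _ ih =>
    intro x
    obtain ⟨y, hy, hxy⟩ := ih x
    obtain ⟨z, hz, hyz⟩ := hcof i y
    rw [Set.biInter_insert]
    exact ⟨z, ⟨hz, isUpperSet_iInter₂ (fun i _ ↦ hupper i) hyz hy⟩, hxy.trans hyz⟩

namespace Vertex

variable {m : ℕ → ℕ} {u v w : Vertex m}

/-- The prefix order: `v ≤ w` when `w` lies in the subtree `T_v`, so the root is the least
vertex. -/
instance : PartialOrder (Vertex m) where
  le := IsPrefix
  le_refl _ := ⟨le_rfl, fun _ ↦ rfl⟩
  le_trans _ _ _ := fun ⟨huv, hu⟩ ⟨hvw, hv⟩ ↦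
    ⟨huv.trans hvw, fun i ↦ (hv (Fin.castLE huv i)).trans (hu i)⟩
  le_antisymm := by
    rintro ⟨n, x⟩ ⟨n', y⟩ ⟨hle, hxy⟩ ⟨hge, -⟩
    obtain rfl : n = n' := le_antisymm hle hge
    exact congrArg (Sigma.mk n) (funext fun i ↦ (hxy i).symm)

instance : Nonempty (Vertex m) := ⟨0, nofun⟩

theorem IsChild.le (h : IsChild v w) : v ≤ w := h.2

theorem IsChild.level_eq (h : IsChild v w) : w.level = v.level + 1 := h.1

theorem exists_le_level_eq {n : ℕ} (h : n ≤ w.level) : ∃ v ≤ w, v.level = n :=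
  ⟨⟨n, fun i ↦ w.2 (Fin.castLE h i)⟩, ⟨h, fun _ ↦ rfl⟩, rfl⟩

theorem exists_isChild_of_level_eq_succ {n : ℕ} (h : w.level = n + 1) :
    ∃ v, IsChild v w ∧ v.level = n := by
  obtain ⟨v, hvw, hv⟩ := exists_le_level_eq (n.le_succ.trans h.ge)
  exact ⟨v, ⟨h.trans (congrArg (· + 1) hv.symm), hvw⟩, hv⟩

theorem le_of_le_of_level_le (hu : u ≤ w) (hv : v ≤ w) (h : u.level ≤ v.level) : u ≤ v :=
  ⟨h, fun i ↦ (hv.2 (Fin.castLE h i)).symm.trans (hu.2 i)⟩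

theorem eq_of_le_of_level_eq (hu : u ≤ w) (hv : v ≤ w) (h : u.level = v.level) : u = v :=
  le_antisymm (le_of_le_of_level_le hu hv h.le) (le_of_le_of_level_le hv hu h.ge)

theorem le_induction {p : Vertex m → Prop} (self : p v)
    (child : ∀ u w, v ≤ u → IsChild u w → p u → p w) (hvw : v ≤ w) : p w := by
  obtain ⟨d, hd⟩ : ∃ d, w.level = v.level + d := Nat.exists_eq_add_of_le hvw.1
  induction d generalizing w with
  | zero => rwa [eq_of_le_of_level_eq le_rfl hvw hd]
  | succ d ih =>
    obtain ⟨u, huw, hu⟩ := exists_isChild_of_level_eq_succ hd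
    have hvu : v ≤ u := le_of_le_of_level_le hvw huw.le (hu ▸ v.level.le_add_right d)
    exact child u w hvu huw (ih hvu hu)

theorem two_pow_le_ncard_layer (hm : ∀ n, 2 ≤ m n) (n : ℕ) : 2 ^ n ≤ (layer m n).ncard := by
  let f (x : ∀ i : Fin n, Fin (m i)) : Vertex m := ⟨n, x⟩
  have hf : f.Injective := fun _ _ h ↦ sigma_mk_injective h
  have hlayer : layer m n = Set.range f := by
    ext ⟨k, x⟩
    constructor
    · rintro rfl
      exact ⟨x, rfl⟩
    · rintro ⟨y, hy⟩
      exact (congrArg level hy).symm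
  calc 2 ^ n = 2 ^ (Finset.univ : Finset (Fin n)).card := by rw [Finset.card_fin]
    _ ≤ ∏ i : Fin n, m i := Finset.pow_card_le_prod _ _ _ fun i _ ↦ hm i
    _ = Nat.card (∀ i : Fin n, Fin (m i)) := by simp
    _ = (layer m n).ncard := by
      rw [hlayer, ← Nat.card_coe_set_eq, Nat.card_range_of_injective hf]

end Vertex

/-- The group `G` acts on the rooted tree of type `m` by tree automorphisms, that is, by
permutations preserving the child relation; levels are then preserved automatically. -/
def IsTreeAction (m : ℕ → ℕ) (G : Type*) [Group G] [MulAction G (Vertex m)] : Prop :=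
  ∀ (g : G) (v w : Vertex m), v.IsChild w ↔ (g • v).IsChild (g • w)

section TreeActions

variable {m : ℕ → ℕ} {G : Type*} [Group G] [MulAction G (Vertex m)]

namespace IsTreeAction

theorem level_smul (hG : IsTreeAction m G) (g : G) (v : Vertex m) : (g • v).level = v.level := by
  obtain ⟨r, hrv, hr⟩ := v.exists_le_level_eq v.level.zero_le
  refine Vertex.le_induction (p := fun w ↦ (g • w).level = w.level) ?_ ?_ hrv
  · by_contra hne
    obtain ⟨k, hk⟩ := Nat.exists_eq_succ_of_ne_zero (hr ▸ hne)
    obtain ⟨u, hu, -⟩ := Vertex.exists_isChild_of_level_eq_succ hk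
    have hchild : (g⁻¹ • u).IsChild r := by simpa using (hG g⁻¹ _ _).1 hu
    exact Nat.succ_ne_zero _ (hchild.level_eq.symm.trans hr)
  · intro u w _ huw ih
    rw [((hG g u w).1 huw).level_eq, ih, huw.level_eq]

theorem smul_mono (hG : IsTreeAction m G) (g : G) : Monotone fun v : Vertex m ↦ g • v :=
  fun v _ ↦ Vertex.le_induction (p := fun w ↦ g • v ≤ g • w) le_rfl
    fun u w _ huw ih ↦ ih.trans ((hG g u w).1 huw).le

theorem orbit_eq_layer (hG : IsTreeAction m G)
    (htrans : ∀ v w : Vertex m, v.level = w.level → ∃ g : G, g • v = w) (v : Vertex m) :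
    orbit G v = layer m v.level := by
  ext w
  constructor
  · rintro ⟨g, rfl⟩
    exact hG.level_smul g v
  · exact fun hw ↦ htrans v w hw.symm

theorem isLowerSet_fixedPoints (hG : IsTreeAction m G) (K : Subgroup G) :
    IsLowerSet (fixedPoints K (Vertex m)) := fun v u huv hv k ↦ by
  have hle : k • u ≤ v := (hv k).symm ▸ hG.smul_mono k huv
  exact Vertex.eq_of_le_of_level_eq hle huv (hG.level_smul k u)

end IsTreeAction

theorem exists_forall_le_level_notMem_fixedPoints (hG : IsTreeAction m G)
    (htrans : ∀ v w : Vertex m, v.level = w.level → ∃ g : G, g • v = w)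
    {K : Subgroup G} [(normalizer (K : Set G)).FiniteIndex]
    (hK : IsCofinal (fixedPoints K (Vertex m))ᶜ) :
    ∃ n, ∀ v : Vertex m, n ≤ v.level → v ∉ fixedPoints K (Vertex m) := by
  set N := normalizer (K : Set G)
  let moved (q : G ⧸ N) : Set (Vertex m) := (q.out⁻¹ • ·) ⁻¹' (fixedPoints K (Vertex m))ᶜ
  have hupper (q : G ⧸ N) : IsUpperSet (moved q) :=
    (hG.isLowerSet_fixedPoints K).compl.preimage (hG.smul_mono _)
  have hcof (q : G ⧸ N) : IsCofinal (moved q) := fun v ↦ by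
    obtain ⟨u, hu, hvu⟩ := hK (q.out⁻¹ • v)
    exact ⟨q.out • u, by simpa [moved] using hu, by simpa using hG.smul_mono q.out hvu⟩
  obtain ⟨u, hu⟩ := (isCofinal_iInter_of_isUpperSet hupper hcof).nonempty
  have hmoved (g : G) : g • u ∉ fixedPoints K (Vertex m) := fun hgu ↦ by
    let q : G ⧸ N := (g⁻¹ : G)
    have hq : q.out⁻¹ * g⁻¹ ∈ N := QuotientGroup.eq.1 q.out_eq'
    refine Set.mem_iInter.1 hu q ?_
    simpa [mul_smul] using smul_mem_fixedPoints_of_mem_normalizer hq hgu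
  refine ⟨u.level, fun v hv hfix ↦ ?_⟩
  obtain ⟨w, hwv, hw⟩ := Vertex.exists_le_level_eq hv
  obtain ⟨g, rfl⟩ := htrans u w hw.symm
  exact hmoved g (hG.isLowerSet_fixedPoints K hwv hfix)

section Rist

variable {v w : Vertex m}

theorem mem_rist {g : G} : g ∈ rist G v ↔ ∀ w, ¬ v ≤ w → g • w = w := by
  simp only [rist, mem_iInf, mem_stabilizer_iff]
  rfl

theorem IsTreeAction.conj_mem_rist (hG : IsTreeAction m G) (g : G) {a : G} (ha : a ∈ rist G v) :
    g * a * g⁻¹ ∈ rist G (g • v) := by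
  rw [mem_rist] at ha ⊢
  intro w hw
  have hvw : ¬ v ≤ g⁻¹ • w := fun hle ↦ hw (by simpa using hG.smul_mono g hle)
  rw [mul_smul, mul_smul, ha _ hvw, smul_inv_smul]

variable [FaithfulSMul G (Vertex m)]

theorem commute_of_mem_rist (hlevel : v.level = w.level) (hne : v ≠ w) {a b : G}
    (ha : a ∈ rist G v) (hb : b ∈ rist G w) : Commute a b := by
  refine commute_of_forall_smul_eq_or_smul_eq fun u : Vertex m ↦ ?_
  by_cases hvu : v ≤ u
  · exact .inr (mem_rist.1 hb u fun hwu ↦ hne (Vertex.eq_of_le_of_level_eq hvu hwu hlevel))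
  · exact .inl (mem_rist.1 ha u hvu)

theorem commutator_ristLayer_le (n : ℕ) :
    ⁅ristLayer m G n, ristLayer m G n⁆ ≤ ⨆ v ∈ layer m n, ⁅rist G v, rist G v⁆ := by
  rw [ristLayer, ristSet, iSup_subtype', iSup_subtype']
  refine commutator_iSup_self_le fun v w hvw ↦ eq_bot_iff.2 (commutator_le.2 fun a ha b hb ↦ ?_)
  have hlevel : v.1.level = w.1.level := v.2.trans w.2.symm
  exact (commute_of_mem_rist hlevel (Subtype.coe_ne_coe.2 hvw) ha hb).commutator_eq

theorem isCofinal_compl_fixedPoints_of_inf_rist_ne_bot {K : Subgroup G}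
    (hK : ∀ v : Vertex m, K ⊓ rist G v ≠ ⊥) : IsCofinal (fixedPoints K (Vertex m))ᶜ := fun v ↦ by
  obtain ⟨k, ⟨hkK, hkv⟩, hk⟩ := (bot_or_exists_ne_one (K ⊓ rist G v)).resolve_left (hK v)
  obtain ⟨u, hu⟩ : ∃ u : Vertex m, k • u ≠ u := by
    by_contra! hfix
    exact hk (faithfulSMul_iff.1 ‹_› k hfix)
  exact ⟨u, fun hfix ↦ hu (hfix ⟨k, hkK⟩), of_not_not fun hvu ↦ hu (mem_rist.1 hkv u hvu)⟩

theorem IsTreeAction.commutatorElement_commutatorElement_eq (hG : IsTreeAction m G) {a b g h : G}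
    (ha : a ∈ rist G v) (hb : b ∈ rist G v) (hg : g • v ≠ v) (hh : h • v ≠ v)
    (hgh : g • v ≠ h • v) : ⁅⁅a, g⁆, ⁅b, h⁆⁆ = ⁅a, b⁆ := by
  have hag := hG.conj_mem_rist g ha
  have hbh := hG.conj_mem_rist h hb
  have hag_b : Commute (g * a * g⁻¹) b := commute_of_mem_rist (hG.level_smul g v) hg hag hb
  have ha_bh : Commute a (h * b * h⁻¹) :=
    commute_of_mem_rist (hG.level_smul h v).symm hh.symm ha hbh
  have hag_bh : Commute (g * a * g⁻¹) (h * b * h⁻¹) :=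
    commute_of_mem_rist ((hG.level_smul g v).trans (hG.level_smul h v).symm) hgh hag hbh
  rw [commutatorElement_eq_mul_conj_inv a g, commutatorElement_eq_mul_conj_inv b h,
    commutatorElement_mul_left_of_commute (hag_b.mul_right hag_bh.inv_right).inv_left,
    commutatorElement_mul_right_of_commute ha_bh.inv_right]

theorem IsTreeAction.commute_conj_commutatorElement (hG : IsTreeAction m G) {a b g h k : G}
    (ha : a ∈ rist G v) (hb : b ∈ rist G v) (hk : ∀ x ∈ ({v, g • v} : Set (Vertex m)),
      ∀ y ∈ ({v, h • v} : Set (Vertex m)), k • x ≠ y) :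
    Commute (k * ⁅a, g⁆ * k⁻¹) ⁅b, h⁆ := by
  have hcomm {x y : Vertex m} (hx : x ∈ ({v, g • v} : Set (Vertex m)))
      (hy : y ∈ ({v, h • v} : Set (Vertex m))) {c d : G} (hc : c ∈ rist G x)
      (hd : d ∈ rist G y) : Commute (k * c * k⁻¹) d := by
    refine commute_of_mem_rist ?_ (hk x hx y hy) (hG.conj_mem_rist k hc) hd
    obtain rfl | rfl := hx <;> obtain rfl | rfl := hy <;> simp only [hG.level_smul]
  have hag := inv_mem (hG.conj_mem_rist g ha)
  have hbh := inv_mem (hG.conj_mem_rist h hb)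
  rw [commutatorElement_eq_mul_conj_inv a g, commutatorElement_eq_mul_conj_inv b h, ← conj_mul]
  refine .mul_left (.mul_right ?_ ?_) (.mul_right ?_ ?_)
  · exact hcomm (.inl rfl) (.inl rfl) ha hb
  · exact hcomm (.inl rfl) (.inr rfl) ha hbh
  · exact hcomm (.inr rfl) (.inl rfl) hag hb
  · exact hcomm (.inr rfl) (.inr rfl) hag hbh

theorem IsTreeAction.commutator_rist_le (hG : IsTreeAction m G) {K : Subgroup G}
    (hv : v ∉ fixedPoints K (Vertex m))
    (horbit : 4 < (orbit (normalizer (K : Set G)).normalCore v).ncard) :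
    ⁅rist G v, rist G v⁆ ≤ K := by
  classical
  set C := (normalizer (K : Set G)).normalCore
  obtain ⟨k, hkK, hkv⟩ : ∃ k ∈ K, k • v ≠ v := by simpa [mem_fixedPoints] using hv
  obtain ⟨g, hgC, hg⟩ : ∃ g ∈ C, g • v ∉ ({v, k⁻¹ • v} : Finset (Vertex m)) :=
    exists_mem_smul_notMem_of_card_lt_ncard_orbit (Finset.card_le_two.trans_lt (by omega))
  obtain ⟨h, hhC, hh⟩ : ∃ h ∈ C, h • v ∉ ({v, g • v, k • v, k • g • v} : Finset (Vertex m)) :=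
    exists_mem_smul_notMem_of_card_lt_ncard_orbit (Finset.card_le_four.trans_lt horbit)
  simp only [Finset.mem_insert, Finset.mem_singleton, not_or, eq_inv_smul_iff] at hg hh
  have hC (x : G) {c : G} (hc : c ∈ C) : ⁅x, c⁆ ∈ normalizer (K : Set G) :=
    normalCore_le _ (commutator_le_right ⊤ C (commutator_mem_commutator (mem_top x) hc))
  refine commutator_le.2 fun a ha b hb ↦ ?_
  rw [← hG.commutatorElement_commutatorElement_eq ha hb hg.1 hh.1 (Ne.symm hh.2.1)]
  refine commutatorElement_mem_of_commute_conj hkK (hC a hgC) (hC b hhC)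
    (hG.commute_conj_commutatorElement ha hb ?_)
  simp [hkv, hg.2, Ne.symm hh.2.2.1, Ne.symm hh.2.2.2]

end Rist

end TreeActions

theorem rist_derived_le_of_meets_all_rists_general
    (m : ℕ → ℕ) (hm : ∀ n, 2 ≤ m n)
    (G : Type*) [Group G] [MulAction G (Vertex m)] [FaithfulSMul G (Vertex m)]
    (hG : IsTreeAction m G)
    (htrans : ∀ v w : Vertex m, v.level = w.level → ∃ g : G, g • v = w)
    (K : Subgroup G) [(normalizer (K : Set G)).FiniteIndex]
    (hmeet : ∀ v : Vertex m, K ⊓ rist G v ≠ ⊥) :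
    ∃ n : ℕ, ⁅ristLayer m G n, ristLayer m G n⁆ ≤ K := by
  set C := (normalizer (K : Set G)).normalCore
  obtain ⟨n₀, hn₀⟩ := exists_forall_le_level_notMem_fixedPoints hG htrans
    (isCofinal_compl_fixedPoints_of_inf_rist_ne_bot hmeet)
  let n := max n₀ (4 * C.index)
  refine ⟨n, (commutator_ristLayer_le n).trans (iSup₂_le fun v hv ↦ ?_)⟩
  replace hv : v.level = n := hv
  refine hG.commutator_rist_le (hn₀ v (hv ▸ le_max_left _ _)) ?_
  refine lt_of_mul_lt_mul_right (a := C.index) ?_ (Nat.zero_le _)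
  calc 4 * C.index ≤ n := le_max_right _ _
    _ < 2 ^ n := Nat.lt_two_pow_self
    _ ≤ (layer m n).ncard := Vertex.two_pow_le_ncard_layer hm n
    _ = (orbit G v).ncard := by rw [hG.orbit_eq_layer htrans, hv]
    _ ≤ (orbit C v).ncard * C.index := ncard_orbit_le_ncard_orbit_mul_index C v

/-- **Lemma.** Let `G` be a branch group on `T` and `K ⊴ H ≤_f G`.  If
`K ∩ rist_G(v) ≠ 1` for every vertex `v` of `T`, then `rist_G(n)' ≤ K` for some `n`. -/
theorem rist_derived_le_of_meets_all_rists
    (m : ℕ → ℕ) (hm : ∀ n, 2 ≤ m n)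
    (G : Type*) [Group G] [MulAction G (Vertex m)] (hG : IsBranchGroup m G)
    (H : Subgroup G) [H.FiniteIndex]
    (K : Subgroup G) (hKH : K ≤ H) (hKn : ∀ h ∈ H, ∀ k ∈ K, h * k * h⁻¹ ∈ K)
    (hmeet : ∀ v : Vertex m, K ⊓ rist G v ≠ ⊥) :
    ∃ n : ℕ, ⁅ristLayer m G n, ristLayer m G n⁆ ≤ K := by
  have hH : H ≤ normalizer (K : Set G) := le_normalizer_iff.2 hKn
  have := finiteIndex_of_le hH
  have := faithfulSMul_iff.2 hG.faithful
  exact rist_derived_le_of_meets_all_rists_general m hm G hG.aut hG.trans K hmeet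
end

section
/- Let G be a group of automorphisms of a rooted tree T, let K be a normal subgroup of G, let k ∈ K and let u be a vertex of T with u·k ≠ u. Then the derived subgroup rist_G(u)' of the rigid stabilizer of u is contained in K. -/
/-!  Common definitions: rooted trees of type `(m n)`, tree automorphisms,
rigid stabilizers, branch groups, and auxiliary notions. -/

universe u

/-!
A normal subgroup `K ∋ k` makes `y` and `k y k⁻¹` equal modulo `K`, so that `⁅x, y⁆ ∈ K` as soon as
`x` commutes with `k y k⁻¹`.  For `x, y` in the rigid stabilizer of `u`, the supports of `x` and
`k y k⁻¹` lie in the subtrees at `u` and `k • u`.  These are distinct vertices of the same level,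
so the subtrees are disjoint, and permutations with disjoint supports commute.
-/

open scoped commutatorElement in
theorem commutatorElement_mem_of_commute_conj_s13 {G : Type*} [Group G] {K : Subgroup G} [K.Normal]
    {k x y : G} (hk : k ∈ K) (hxy : Commute x (k * y * k⁻¹)) : ⁅x, y⁆ ∈ K := by
  let π := QuotientGroup.mk' K
  have hπk : π k = 1 := (QuotientGroup.eq_one_iff k).2 hk
  have hπ : Commute (π x) (π y) := by
    simpa only [map_mul, map_inv, hπk, one_mul, inv_one, mul_one] using hxy.map π
  rw [← QuotientGroup.eq_one_iff]
  exact (map_commutatorElement π x y).trans (commutatorElement_eq_one_iff_commute.2 hπ)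

section FixingSubgroup

open scoped Pointwise

variable {G α : Type*} [Group G] [MulAction G α] [FaithfulSMul G α]

theorem commute_of_mem_fixingSubgroup_compl {s t : Set α} (hst : Disjoint s t) {g h : G}
    (hg : g ∈ fixingSubgroup G sᶜ) (hh : h ∈ fixingSubgroup G tᶜ) : Commute g h := by
  have hperm : Equiv.Perm.Disjoint (MulAction.toPermHom G α g) (MulAction.toPermHom G α h) := by
    intro a
    by_cases ha : a ∈ s
    · exact .inr ((mem_fixingSubgroup_iff G).1 hh a (hst.notMem_of_mem_left ha))
    · exact .inl ((mem_fixingSubgroup_iff G).1 hg a ha)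
  exact hperm.commute.of_map MulAction.toPerm_injective

theorem commutator_fixingSubgroup_compl_le_of_disjoint_smul {K : Subgroup G} [K.Normal] {k : G}
    (hk : k ∈ K) {s : Set α} (hs : Disjoint s (k • s)) :
    ⁅fixingSubgroup G sᶜ, fixingSubgroup G sᶜ⁆ ≤ K := by
  refine Subgroup.commutator_le.2 fun x hx y hy ↦ commutatorElement_mem_of_commute_conj_s13 hk ?_
  have hconj : k * y * k⁻¹ ∈ fixingSubgroup G (k • s)ᶜ :=
    Set.conj_mem_fixingSubgroup Set.smul_set_compl hy
  exact commute_of_mem_fixingSubgroup_compl hs hx hconj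

end FixingSubgroup

namespace Vertex

variable {m m' : ℕ → ℕ}

/-- The prefix of length `n` of a vertex `v`. -/
def take (v : Vertex m) (n : ℕ) (h : n ≤ v.level) : Vertex m :=
  ⟨n, fun i ↦ v.2 (Fin.castLE h i)⟩

/-- The vertex set of the subtree `T_v`, consisting of `v` and its descendants. -/
def subtree (v : Vertex m) : Set (Vertex m) := {w | IsPrefix v w}

theorem isChild_take_succ (v : Vertex m) (n : ℕ) (h : n + 1 ≤ v.level) :
    IsChild (v.take n (Nat.le_of_succ_le h)) (v.take (n + 1) h) :=
  ⟨rfl, Nat.le_succ n, fun _ ↦ rfl⟩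

theorem isPrefix_iff_exists_take_eq {v w : Vertex m} :
    IsPrefix v w ↔ ∃ n, ∃ h : n ≤ w.level, w.take n h = v := by
  constructor
  · obtain ⟨n, x⟩ := v
    rintro ⟨h, hx⟩
    exact ⟨n, h, congrArg (Sigma.mk n) (funext hx)⟩
  · rintro ⟨n, h, rfl⟩
    exact ⟨h, fun _ ↦ rfl⟩

theorem IsPrefix.eq_of_level_eq {u v w : Vertex m} (hu : IsPrefix u w) (hv : IsPrefix v w)
    (huv : u.level = v.level) : u = v := by
  obtain ⟨n, hn, rfl⟩ := isPrefix_iff_exists_take_eq.1 hu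
  obtain ⟨n', hn', rfl⟩ := isPrefix_iff_exists_take_eq.1 hv
  obtain rfl : n = n' := huv
  rfl

theorem disjoint_subtree {u v : Vertex m} (huv : u.level = v.level) (hne : u ≠ v) :
    Disjoint u.subtree v.subtree :=
  Set.disjoint_left.2 fun _ hu hv ↦ hne (hu.eq_of_level_eq hv huv)

theorem IsPrefix.trans {u v w : Vertex m} (huv : IsPrefix u v) (hvw : IsPrefix v w) :
    IsPrefix u w :=
  ⟨huv.1.trans hvw.1, fun i ↦ (hvw.2 (Fin.castLE huv.1 i)).trans (huv.2 i)⟩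

theorem isPrefix_iff_reflTransGen_isChild {v w : Vertex m} :
    IsPrefix v w ↔ Relation.ReflTransGen IsChild v w := by
  constructor
  · rw [isPrefix_iff_exists_take_eq]
    rintro ⟨n, h, rfl⟩
    induction h using Nat.decreasingInduction with
    | self => exact .refl
    | of_succ n h ih => exact ih.head (w.isChild_take_succ n h)
  · intro h
    induction h with
    | refl => exact ⟨le_rfl, fun _ ↦ rfl⟩
    | tail _ hchild ih => exact ih.trans hchild.2

theorem IsPrefix.map (f : @IsChild m →r @IsChild m') {v w : Vertex m} (h : IsPrefix v w) :
    IsPrefix (f v) (f w) :=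
  isPrefix_iff_reflTransGen_isChild.2 <|
    (isPrefix_iff_reflTransGen_isChild.1 h).lift f fun _ _ ↦ f.map_rel

theorem level_le_level_map (f : @IsChild m →r @IsChild m') (v : Vertex m) :
    v.level ≤ (f v).level := by
  have le_level_map_take (n : ℕ) (h : n ≤ v.level) : n ≤ (f (v.take n h)).level := by
    induction n with
    | zero => exact Nat.zero_le _
    | succ n ih =>
      calc n + 1 ≤ (f (v.take n (Nat.le_of_succ_le h))).level + 1 := Nat.succ_le_succ (ih _)
        _ = (f (v.take (n + 1) h)).level := (f.map_rel (v.isChild_take_succ n h)).1.symm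
  exact le_level_map_take v.level le_rfl

theorem level_map (e : @IsChild m ≃r @IsChild m') (v : Vertex m) : (e v).level = v.level := by
  refine le_antisymm ?_ (level_le_level_map (e : @IsChild m →r @IsChild m') v)
  simpa using level_le_level_map (e.symm : @IsChild m' →r @IsChild m) (e v)

end Vertex

theorem rist_eq_fixingSubgroup_compl_subtree {m : ℕ → ℕ} (G : Type*) [Group G]
    [MulAction G (Vertex m)] (v : Vertex m) : rist G v = fixingSubgroup G v.subtreeᶜ := by
  ext g
  simp only [rist, Subgroup.mem_iInf, MulAction.mem_stabilizer_iff, mem_fixingSubgroup_iff,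
    Vertex.subtree, Set.mem_compl_iff, Set.mem_ofPred_eq]

open scoped Pointwise in
theorem rist_derived_le_of_moved_vertex_general {m : ℕ → ℕ} {G : Type*} [Group G]
    [MulAction G (Vertex m)] [FaithfulSMul G (Vertex m)] {K : Subgroup G} [K.Normal] {k : G}
    (hk : k ∈ K) (haut : ∀ v w : Vertex m, Vertex.IsChild v w ↔ Vertex.IsChild (k • v) (k • w))
    {u : Vertex m} (hu : k • u ≠ u) : ⁅rist G u, rist G u⁆ ≤ K := by
  let φ : @Vertex.IsChild m ≃r @Vertex.IsChild m := ⟨MulAction.toPerm k, (haut _ _).symm⟩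
  have hlevel : (k • u).level = u.level := Vertex.level_map φ u
  have hsubtree : k • u.subtree ⊆ (k • u).subtree :=
    Set.smul_set_subset_iff.2 fun _ hw ↦ hw.map (φ : @Vertex.IsChild m →r @Vertex.IsChild m)
  have hdisjoint : Disjoint u.subtree (k • u.subtree) :=
    (Vertex.disjoint_subtree hlevel.symm hu.symm).mono_right hsubtree
  rw [rist_eq_fixingSubgroup_compl_subtree]
  exact commutator_fixingSubgroup_compl_le_of_disjoint_smul hk hdisjoint

/-- **Lemma.** Let `G` be a group of automorphisms of a rooted tree `T`, `K ⊴ G`,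
`k ∈ K` and `u` a vertex with `u·k ≠ u`.  Then `rist_G(u)' ≤ K`. -/
theorem rist_derived_le_of_moved_vertex
    (m : ℕ → ℕ) (hm : ∀ n, 2 ≤ m n)
    (G : Type*) [Group G] [MulAction G (Vertex m)]
    (hfaith : ∀ g : G, (∀ v : Vertex m, g • v = v) → g = 1)
    (haut : ∀ (g : G) (v w : Vertex m),
      Vertex.IsChild v w ↔ Vertex.IsChild (g • v) (g • w))
    (K : Subgroup G) [K.Normal] (k : G) (hk : k ∈ K)
    (u : Vertex m) (hu : k • u ≠ u) :
    ⁅rist G u, rist G u⁆ ≤ K := by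
  have : FaithfulSMul G (Vertex m) := faithfulSMul_iff.2 hfaith
  exact rist_derived_le_of_moved_vertex_general hk (haut k) hu
end
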